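/- arXiv:1510.00330 — 2 statements merged into one kernel-verified Lean document; each statement's English description precedes it below -/
import Mathlib

section
/- The exact doubling time logb (6/5) 2 differs from the Babylonian value 3;48,6 = 3 + 48/60 + 6/60^2 by less than 1/60^2, i.e. |logb (6/5) 2 − (3 + 48/60 + 6/3600)| < 1/3600. -/
/-!
The doubling time is trapped between two fractions of small denominator,
`441/116 < logb (6/5) 2 < 403/106`, both within `1/3600` of `3;48,6`. Each bound is the
logarithm of a comparison of integer powers: `(6/5)^441 < 2^116` and `2^106 < (6/5)^403`.
-/

-- The powers below exceed the default exponent bound of 256 for numeral evaluation.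
set_option exponentiation.threshold 500 in
theorem babylonian_value_accuracy :
    |Real.logb (6 / 5) 2 - (3 + 48 / 60 + 6 / 3600)| < 1 / 3600 := by
  have hb : (1 : ℝ) < 6 / 5 := by norm_num
  have lower : (441 : ℝ) < 116 * Real.logb (6 / 5) 2 := by
    have h := Real.logb_lt_logb hb (by positivity)
      (show ((6 / 5 : ℝ)) ^ 441 < 2 ^ 116 by norm_num)
    rw [Real.logb_pow, Real.logb_pow, Real.logb_self_eq_one hb] at h
    norm_num at h
    exact h
  have upper : 106 * Real.logb (6 / 5) 2 < (403 : ℝ) := by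
    have h := Real.logb_lt_logb hb (by positivity)
      (show (2 : ℝ) ^ 106 < (6 / 5 : ℝ) ^ 403 by norm_num)
    rw [Real.logb_pow, Real.logb_pow, Real.logb_self_eq_one hb] at h
    norm_num at h
    exact h
  rw [abs_lt]
  constructor <;> linarith
end

section
/- The scribe's interpolated doubling time 409/108 = 3;47,13,20 underestimates the true doubling time: 409/108 < logb (6/5) 2; equivalently (6/5)^(409/108) < 2. -/
/-!
Since `409/108 = 3 + 85/108`, Bernoulli's inequality for the exponent `85/108 ∈ (0, 1)` (the chord of
the strictly convex function `t ↦ (6/5)^t` over `[3, 4]` lies above its graph) gives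
`(6/5)^(409/108) < (6/5)^3 * (1 + (85/108) * (1/5)) = 2`. Taking logarithms to base `6/5 > 1` yields
the bound on the doubling time.
-/

theorem interpolation_underestimates :
    (409 : ℝ) / 108 < Real.logb (6 / 5) 2 ∧ ((6 : ℝ) / 5) ^ ((409 : ℝ) / 108) < 2 := by
  have bernoulli : (1 + 1 / 5 : ℝ) ^ (85 / 108 : ℝ) < 1 + 85 / 108 * (1 / 5) :=
    rpow_one_add_lt_one_add_mul_self (by norm_num) (by norm_num) (by norm_num) (by norm_num)
  have key : ((6 : ℝ) / 5) ^ ((409 : ℝ) / 108) < 2 := by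
    have split : ((6 : ℝ) / 5) ^ ((409 : ℝ) / 108) =
        (6 / 5) ^ 3 * (1 + 1 / 5 : ℝ) ^ (85 / 108 : ℝ) := by
      rw [show (1 + 1 / 5 : ℝ) = 6 / 5 by norm_num, ← Real.rpow_natCast,
        ← Real.rpow_add (by norm_num)]
      norm_num
    rw [split]
    linarith
  exact ⟨(Real.lt_logb_iff_rpow_lt (by norm_num) (by norm_num)).2 key, key⟩
end
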